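/- arXiv:2303.05979 — 6 statements merged into one kernel-verified Lean document; each statement's English description precedes it below -/
import Mathlib

section
/- Splitting of the 4-body Hamiltonian in Jacobi coordinates. Fix masses m_0,m_1,m_2,m_3 > 0, set M_j = m_0 + ⋯ + m_j, σ_{ij} = m_i/M_j, 1/μ_j = 1/M_{j−1} + 1/m_j. Let x_0,…,x_3 ∈ ℝ³ be pairwise distinct and y_0,…,y_3 ∈ ℝ³ satisfy y_0 + y_1 + y_2 + y_3 = 0, and let (q_j, p_j) be the Jacobi coordinates of (x_j, y_j). Then the 4-body Hamiltonian H = Σ_{j=0}^{3} ‖y_j‖²/(2m_j) − Σ_{0≤i<j≤3} m_i m_j/‖x_j − x_i‖ equals F_Kep(q,p) + F_per(q,p), where F_Kep = Σ_{j=1}^{3} ( ‖p_j‖²/(2μ_j) − μ_j M_j/‖q_j‖ ) and F_per = Σ_{j=2}^{3} μ_j M_j/‖q_j‖ − m_0 m_2/‖q_2 + σ_{11} q_1‖ − m_0 m_3/‖q_3 + σ_{22} q_2 + σ_{11} q_1‖ − m_1 m_2/‖q_2 − σ_{01} q_1‖ − m_1 m_3/‖q_3 + σ_{22} q_2 + (σ_{11}−1)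 q_1‖ − m_2 m_3/‖q_3 + (σ_{22}−1) q_2‖. -/
noncomputable section

open Real

/-- Vectors in physical space `ℝ³`, with the Euclidean norm. -/
abbrev V3 : Type := EuclideanSpace ℝ (Fin 3)

/-- Kinetic energy in Jacobi momenta, in the frame of vanishing total momentum. -/
theorem kineticEnergy_eq_jacobi {E : Type*} [NormedAddCommGroup E] [InnerProductSpace ℝ E]
    {a b c d : ℝ} (ha : 0 < a) (hb : 0 < b) (hc : 0 < c) (hd : 0 < d)
    {u v w z : E} (h : u + v + w + z = 0) :
    ‖u‖ ^ 2 / (2 * a) + ‖v‖ ^ 2 / (2 * b) + ‖w‖ ^ 2 / (2 * c) + ‖z‖ ^ 2 / (2 * d) =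
      ‖v + (b / (a + b)) • w + (b / (a + b)) • z‖ ^ 2 / (2 * (a * b / (a + b)))
        + ‖w + (c / (a + b + c)) • z‖ ^ 2 / (2 * ((a + b) * c / (a + b + c)))
        + ‖z‖ ^ 2 / (2 * ((a + b + c) * d / (a + b + c + d))) := by
  have hu : u = -(v + w + z) := by
    rw [← sub_eq_zero, ← h]
    abel
  have hab : a + b ≠ 0 := by positivity
  have habc : a + b + c ≠ 0 := by positivity
  have habcd : a + b + c + d ≠ 0 := by positivity
  rw [hu, norm_neg]
  simp only [← real_inner_self_eq_norm_sq, inner_add_left, inner_add_right, real_inner_smul_left,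
    real_inner_smul_right, real_inner_comm v w, real_inner_comm v z, real_inner_comm w z]
  field_simp
  ring

/-- **Splitting of the 4-body Hamiltonian in Jacobi coordinates.** For pairwise distinct
positions and vanishing total linear momentum, `H = F_Kep + F_per`. -/
theorem fourBody_hamiltonian_split_jacobi
    (m : Fin 4 → ℝ) (hm : ∀ j, 0 < m j)
    (x y : Fin 4 → V3)
    (hx : ∀ i j : Fin 4, i ≠ j → x i ≠ x j)
    (hy : y 0 + y 1 + y 2 + y 3 = 0) :
    -- cumulative masses, mass ratios and reduced masses
    (fun (M1 M2 M3 : ℝ) =>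
     (fun (σ01 σ11 σ02 σ12 σ22 μ1 μ2 μ3 : ℝ) =>
      -- Jacobi coordinates
      (fun (q1 q2 q3 p1 p2 p3 : V3) =>
        -- the 4-body Hamiltonian
        (‖y 0‖ ^ 2 / (2 * m 0) + ‖y 1‖ ^ 2 / (2 * m 1) + ‖y 2‖ ^ 2 / (2 * m 2)
            + ‖y 3‖ ^ 2 / (2 * m 3)
          - (m 0 * m 1 / ‖x 1 - x 0‖ + m 0 * m 2 / ‖x 2 - x 0‖ + m 0 * m 3 / ‖x 3 - x 0‖
            + m 1 * m 2 / ‖x 2 - x 1‖ + m 1 * m 3 / ‖x 3 - x 1‖ + m 2 * m 3 / ‖x 3 - x 2‖))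
        =
        -- F_Kep
        ((‖p1‖ ^ 2 / (2 * μ1) - μ1 * M1 / ‖q1‖)
          + (‖p2‖ ^ 2 / (2 * μ2) - μ2 * M2 / ‖q2‖)
          + (‖p3‖ ^ 2 / (2 * μ3) - μ3 * M3 / ‖q3‖))
        +
        -- F_per
        (μ2 * M2 / ‖q2‖ + μ3 * M3 / ‖q3‖
          - m 0 * m 2 / ‖q2 + σ11 • q1‖
          - m 0 * m 3 / ‖q3 + σ22 • q2 + σ11 • q1‖
          - m 1 * m 2 / ‖q2 - σ01 • q1‖
          - m 1 * m 3 / ‖q3 + σ22 • q2 + (σ11 - 1) • q1‖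
          - m 2 * m 3 / ‖q3 + (σ22 - 1) • q2‖))
      (x 1 - x 0)
      (x 2 - σ01 • x 0 - σ11 • x 1)
      (x 3 - σ02 • x 0 - σ12 • x 1 - σ22 • x 2)
      (y 1 + σ11 • y 2 + σ11 • y 3)
      (y 2 + σ22 • y 3)
      (y 3))
     (m 0 / M1) (m 1 / M1) (m 0 / M2) (m 1 / M2) (m 2 / M2)
     (m 0 * m 1 / M1) (M1 * m 2 / M2) (M2 * m 3 / M3))
    (m 0 + m 1) (m 0 + m 1 + m 2) (m 0 + m 1 + m 2 + m 3) := by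
  have h0 := hm 0
  have h1 := hm 1
  have h2 := hm 2
  have h3 := hm 3
  have hM1 : m 0 + m 1 ≠ 0 := by positivity
  have hM2 : m 0 + m 1 + m 2 ≠ 0 := by positivity
  beta_reduce
  have e02 : x 2 - (m 0 / (m 0 + m 1)) • x 0 - (m 1 / (m 0 + m 1)) • x 1
      + (m 1 / (m 0 + m 1)) • (x 1 - x 0) = x 2 - x 0 := by
    match_scalars <;> field_simp <;> ring
  have e12 : x 2 - (m 0 / (m 0 + m 1)) • x 0 - (m 1 / (m 0 + m 1)) • x 1
      - (m 0 / (m 0 + m 1)) • (x 1 - x 0) = x 2 - x 1 := by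
    match_scalars <;> field_simp <;> ring
  have e23 : x 3 - (m 0 / (m 0 + m 1 + m 2)) • x 0 - (m 1 / (m 0 + m 1 + m 2)) • x 1
      - (m 2 / (m 0 + m 1 + m 2)) • x 2 + (m 2 / (m 0 + m 1 + m 2) - 1) •
        (x 2 - (m 0 / (m 0 + m 1)) • x 0 - (m 1 / (m 0 + m 1)) • x 1) = x 3 - x 2 := by
    match_scalars <;> field_simp <;> ring
  have e03 : x 3 - (m 0 / (m 0 + m 1 + m 2)) • x 0 - (m 1 / (m 0 + m 1 + m 2)) • x 1
      - (m 2 / (m 0 + m 1 + m 2)) • x 2 + (m 2 / (m 0 + m 1 + m 2)) •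
        (x 2 - (m 0 / (m 0 + m 1)) • x 0 - (m 1 / (m 0 + m 1)) • x 1)
      + (m 1 / (m 0 + m 1)) • (x 1 - x 0) = x 3 - x 0 := by
    match_scalars <;> field_simp <;> ring
  have e13 : x 3 - (m 0 / (m 0 + m 1 + m 2)) • x 0 - (m 1 / (m 0 + m 1 + m 2)) • x 1
      - (m 2 / (m 0 + m 1 + m 2)) • x 2 + (m 2 / (m 0 + m 1 + m 2)) •
        (x 2 - (m 0 / (m 0 + m 1)) • x 0 - (m 1 / (m 0 + m 1)) • x 1)
      + (m 1 / (m 0 + m 1) - 1) • (x 1 - x 0) = x 3 - x 1 := by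
    match_scalars <;> field_simp <;> ring
  rw [e02, e12, e23, e03, e13, div_mul_cancel₀ _ hM1, kineticEnergy_eq_jacobi h0 h1 h2 h3 hy]
  ring
end
end

section
/- Legendre expansion of the inner perturbing function. Fix masses m_0,m_1,m_2 > 0, set M_1 = m_0 + m_1, M_2 = m_0 + m_1 + m_2, σ_{01} = m_0/M_1, σ_{11} = m_1/M_1, μ_1 = m_0 m_1/M_1, μ_2 = M_1 m_2/M_2, and σ̃_{1,n} = σ_{01}^{n−1} + (−1)ⁿ σ_{11}^{n−1}. Let q_1, q_2 ∈ ℝ³ \ {0} satisfy max(σ_{01}, σ_{11})·‖q_1‖ < ‖q_2‖, and set cos ζ_1 = ⟨q_1, q_2⟩/(‖q_1‖‖q_2‖). Then the series Σ_{n≥2} σ̃_{1,n} P_n(cos ζ_1) (‖q_1‖/‖q_2‖)ⁿ converges absolutely and μ_2 M_2/‖q_2‖ − m_0 m_2/‖q_2 + σ_{11} q_1‖ − m_1 m_2/‖q_2 − σ_{01} q_1‖ = −(μ_1 m_2/‖q_2‖) · Σ_{n=2}^{∞} σ̃_{1,n} P_n(cos ζ_1) (‖q_1‖/‖q_2‖)ⁿ.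 -/
noncomputable section

open Real
open scoped RealInnerProductSpace

/-- The `n`-th Legendre polynomial, via Rodrigues' formula
`P_n(x) = (1/(2ⁿ n!)) dⁿ/dxⁿ (x² − 1)ⁿ`. -/
def legendreP (n : ℕ) (x : ℝ) : ℝ :=
  (1 / (2 ^ n * (n.factorial : ℝ))) * iteratedDeriv n (fun y : ℝ => (y ^ 2 - 1) ^ n) x

/-- The Legendre polynomial as a formal polynomial, by Rodrigues' formula. -/
def legendrePoly (n : ℕ) : Polynomial ℝ :=
  Polynomial.C (1 / (2 ^ n * (n.factorial : ℝ))) *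
    Polynomial.derivative^[n] ((Polynomial.X ^ 2 - 1) ^ n)

theorem iteratedDeriv_polynomial_eval (p : Polynomial ℝ) (n : ℕ) :
    iteratedDeriv n (fun y => p.eval y) = fun y => (Polynomial.derivative^[n] p).eval y := by
  induction n with
  | zero => simp
  | succ n ih =>
    rw [iteratedDeriv_succ, ih, Function.iterate_succ_apply']
    funext y
    exact Polynomial.deriv _

theorem legendreP_eq_eval (n : ℕ) (x : ℝ) : legendreP n x = (legendrePoly n).eval x := by
  have h := congrFun
    (iteratedDeriv_polynomial_eval ((Polynomial.X ^ 2 - 1 : Polynomial ℝ) ^ n) n) x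
  simp only [Polynomial.eval_pow, Polynomial.eval_sub, Polynomial.eval_X,
    Polynomial.eval_one] at h
  rw [legendreP, h, legendrePoly, Polynomial.eval_mul, Polynomial.eval_C]

theorem legendreP_zero (x : ℝ) : legendreP 0 x = 1 := by simp [legendreP]

theorem legendreP_one (x : ℝ) : legendreP 1 x = x := by
  simp [legendreP_eq_eval, legendrePoly, Polynomial.derivative_pow]

open Polynomial in
theorem derivative_legendrePoly_succ (n : ℕ) :
    derivative (legendrePoly (n + 1)) =
      X * derivative (legendrePoly n) + C ((n : ℝ) + 1) * legendrePoly n := by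
  have hd : derivative ((X ^ 2 - 1 : ℝ[X]) ^ (n + 1)) =
      C (2 * ((n : ℝ) + 1)) * ((X ^ 2 - 1) ^ n * X) := by
    simp [derivative_pow, map_ofNat]
    ring
  have hc : (1 / (2 ^ (n + 1) * ((n + 1).factorial : ℝ))) * (2 * ((n : ℝ) + 1)) =
      1 / (2 ^ n * (n.factorial : ℝ)) := by
    rw [Nat.factorial_succ]
    push_cast
    have : (n.factorial : ℝ) ≠ 0 := by positivity
    field_simp
    ring
  simp only [legendrePoly, derivative_C_mul, ← Function.iterate_succ_apply']
  rw [Function.iterate_succ_apply, hd, iterate_derivative_C_mul, iterate_derivative_mul_X,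
    ← mul_assoc, ← C_mul, hc]
  simp only [Nat.add_sub_cancel, nsmul_eq_mul]
  push_cast
  simp only [map_add, map_natCast, map_one]
  ring

open Polynomial in
theorem derivative_legendrePoly_add_two (n : ℕ) :
    derivative (legendrePoly (n + 2)) =
      C (2 * (n : ℝ) + 3) * legendrePoly (n + 1) + derivative (legendrePoly n) := by
  have hd : derivative^[2] ((X ^ 2 - 1 : ℝ[X]) ^ (n + 2)) =
      C (2 * ((n : ℝ) + 2) * (2 * n + 3)) * (X ^ 2 - 1) ^ (n + 1) +
        C (4 * ((n : ℝ) + 1) * (n + 2)) * (X ^ 2 - 1) ^ n := by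
    simp [derivative_pow, map_ofNat]
    ring
  have hf : (n.factorial : ℝ) ≠ 0 := by positivity
  have hc : (1 / (2 ^ (n + 2) * ((n + 2).factorial : ℝ))) * (2 * ((n : ℝ) + 2) * (2 * n + 3)) =
      (2 * n + 3) * (1 / (2 ^ (n + 1) * ((n + 1).factorial : ℝ))) := by
    simp only [Nat.factorial_succ]
    push_cast
    field_simp
    ring
  have hc' : (1 / (2 ^ (n + 2) * ((n + 2).factorial : ℝ))) * (4 * ((n : ℝ) + 1) * (n + 2)) =
      1 / (2 ^ n * (n.factorial : ℝ)) := by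
    simp only [Nat.factorial_succ]
    push_cast
    field_simp
    ring
  simp only [legendrePoly, derivative_C_mul, ← Function.iterate_succ_apply']
  rw [show (n + 2).succ = (n + 1) + 2 by rfl, Function.iterate_add_apply, hd,
    iterate_map_add, iterate_derivative_C_mul, iterate_derivative_C_mul, mul_add,
    ← mul_assoc, ← C_mul, hc, ← mul_assoc, ← C_mul, hc', C_mul, mul_assoc]

open Polynomial in
/-- Bonnet's three-term recurrence. -/
theorem legendrePoly_recurrence (n : ℕ) :
    C ((n : ℝ) + 2) * legendrePoly (n + 2) =
      C (2 * (n : ℝ) + 3) * X * legendrePoly (n + 1) - C ((n : ℝ) + 1) * legendrePoly n := by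
  have b0 := derivative_legendrePoly_succ n
  have b1 := derivative_legendrePoly_succ (n + 1)
  have b2 := derivative_legendrePoly_succ (n + 2)
  have a0 := derivative_legendrePoly_add_two n
  have a1 := derivative_legendrePoly_add_two (n + 1)
  apply mul_left_cancel₀ (X_ne_zero (R := ℝ))
  simp only [map_add, map_mul, map_natCast, map_one, map_ofNat, Nat.cast_add, Nat.cast_one,
    Nat.cast_ofNat, add_assoc, Nat.reduceAdd] at *
  linear_combination b1 - X * (a1 - b2) - (1 - X ^ 2) * b1 - X * (b0 - X * (a0 - b1))

theorem legendreP_recurrence (n : ℕ) (x : ℝ) :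
    ((n : ℝ) + 2) * legendreP (n + 2) x =
      (2 * n + 3) * x * legendreP (n + 1) x - (n + 1) * legendreP n x := by
  simpa [legendreP_eq_eval] using congrArg (Polynomial.eval x) (legendrePoly_recurrence n)

theorem choose_half_succ (k : ℕ) :
    ((k : ℂ) + 1) * Ring.choose ((1 / 2 : ℂ) + ((k + 1 : ℕ) : ℂ) - 1) (k + 1) =
      ((k : ℂ) + 1 / 2) * Ring.choose ((1 / 2 : ℂ) + (k : ℂ) - 1) k := by
  simp only [← Ring.multichoose_eq]
  have h1 := Ring.factorial_nsmul_multichoose_eq_ascPochhammer (1 / 2 : ℂ) (k + 1)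
  have h0 := Ring.factorial_nsmul_multichoose_eq_ascPochhammer (1 / 2 : ℂ) k
  simp only [Polynomial.ascPochhammer_smeval_eq_eval, nsmul_eq_mul] at h0 h1
  rw [ascPochhammer_succ_eval, ← h0, Nat.factorial_succ] at h1
  have hf : (k.factorial : ℂ) ≠ 0 := by exact_mod_cast k.factorial_ne_zero
  apply mul_left_cancel₀ hf
  push_cast at h1 ⊢
  linear_combination h1

/-- The formal power series of `(1 - z X)^(-1/2)`. -/
def invSqrtSeries (z : ℂ) : PowerSeries ℂ :=
  PowerSeries.mk fun n => Ring.choose ((1 / 2 : ℂ) + (n : ℂ) - 1) n * z ^ n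

open PowerSeries in
theorem derivative_invSqrtSeries (z : ℂ) :
    (1 - C z * X) * d⁄dX ℂ (invSqrtSeries z) = C (z / 2) * invSqrtSeries z := by
  ext n
  rw [sub_mul, one_mul, map_sub, mul_assoc, coeff_C_mul, coeff_C_mul, coeff_derivative]
  cases n with
  | zero =>
    simp [invSqrtSeries]
    ring
  | succ n =>
    have := choose_half_succ (n + 1)
    rw [coeff_succ_X_mul, coeff_derivative]
    simp only [invSqrtSeries, coeff_mk]
    push_cast at this ⊢
    linear_combination z ^ (n + 2) * this

open PowerSeries in
theorem coeff_invSqrtSeries_mul (z w : ℂ) (x : ℝ) (hs : z + w = 2 * x) (hp : z * w = 1) (n : ℕ) :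
    coeff n (invSqrtSeries z * invSqrtSeries w) = (legendreP n x : ℂ) := by
  set F := invSqrtSeries z * invSqrtSeries w with hF
  have hode : (1 - C (2 * (x : ℂ)) * X + X * X) * d⁄dX ℂ F = C (x : ℂ) * F - X * F := by
    have hz := derivative_invSqrtSeries z
    have hw := derivative_invSqrtSeries w
    have hs' : C z + C w = C (2 * (x : ℂ)) := by rw [← map_add, hs]
    have hp' : C z * C w = 1 := by rw [← map_mul, hp, map_one]
    have hx : C (z / 2) + C (w / 2) = C (x : ℂ) := by
      rw [← map_add]; congr 1; linear_combination hs / 2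
    have hzw : C (z / 2) * C w + C (w / 2) * C z = 1 := by
      rw [← map_mul, ← map_mul, ← map_add, ← map_one C]; congr 1; linear_combination hp
    have hF' : d⁄dX ℂ F = invSqrtSeries z * d⁄dX ℂ (invSqrtSeries w) +
        invSqrtSeries w * d⁄dX ℂ (invSqrtSeries z) := by
      rw [hF, Derivation.leibniz, smul_eq_mul, smul_eq_mul]
    linear_combination (1 - C w * X) * invSqrtSeries w * hz + (1 - C z * X) * invSqrtSeries z * hw
      + X * (d⁄dX ℂ F) * hs' - X * X * (d⁄dX ℂ F) * hp' + F * hx - X * F * hzw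
      + (1 - C z * X) * (1 - C w * X) * hF'
  have h0 : coeff 0 F = 1 := by
    simp [hF, invSqrtSeries, coeff_mul]
  have h1 : coeff 1 F = x := by
    have := congrArg (coeff 0) hode
    have h' := coeff_derivative F 0
    simp [sub_mul, add_mul, mul_assoc] at this h0 h'
    rw [← h', this, h0, mul_one]
  have hrec (n : ℕ) : ((n : ℂ) + 2) * coeff (n + 2) F =
      (2 * n + 3) * x * coeff (n + 1) F - (n + 1) * coeff n F := by
    have := congrArg (coeff (n + 1)) hode
    simp only [sub_mul, add_mul, mul_assoc, one_mul, map_sub, map_add, coeff_C_mul,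
      coeff_succ_X_mul, coeff_derivative] at this
    cases n with
    | zero =>
      simp at this ⊢
      linear_combination this
    | succ n =>
      rw [coeff_succ_X_mul, coeff_derivative] at this
      push_cast at this ⊢
      linear_combination this
  induction n using Nat.twoStepInduction with
  | zero => rw [h0, legendreP_zero, Complex.ofReal_one]
  | one => rw [h1, legendreP_one]
  | more n ih0 ih1 =>
    have h := congrArg (fun r : ℝ => (r : ℂ)) (legendreP_recurrence n x)
    push_cast at h
    have hn : (n : ℂ) + 2 ≠ 0 := by exact_mod_cast (n + 1).succ_ne_zero
    apply mul_left_cancel₀ hn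
    rw [hrec, ih0, ih1, h]

/-- The generating function of the Legendre polynomials, with absolute convergence. -/
theorem legendreP_generating (x t : ℝ) (hx : |x| ≤ 1) (ht : |t| < 1) :
    (Summable fun n => |legendreP n x * t ^ n|) ∧
      ∑' n, legendreP n x * t ^ n = 1 / √(1 - 2 * x * t + t ^ 2) := by
  have hx2 : 0 ≤ 1 - x ^ 2 := by nlinarith [abs_le.mp hx]
  set z : ℂ := ⟨x, √(1 - x ^ 2)⟩ with hz
  have hzw : z * (starRingEnd ℂ) z = 1 := by
    rw [Complex.mul_conj, Complex.normSq_mk]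
    norm_cast
    nlinarith [Real.mul_self_sqrt hx2]
  have hzs : z + (starRingEnd ℂ) z = 2 * x := by
    rw [Complex.add_conj]; push_cast; rfl
  have hznorm : ‖z‖ = 1 := by
    have := congrArg norm hzw
    rw [norm_mul, RCLike.norm_conj, norm_one] at this
    nlinarith [norm_nonneg z]
  have hball (u : ℂ) (hu : ‖u‖ = 1) : (t : ℂ) * u ∈ Metric.eball (0 : ℂ) 1 := by
    rw [← ENNReal.ofReal_one, Metric.eball_ofReal]
    simpa [hu] using ht
  have hfps := Complex.one_div_one_sub_cpow_hasFPowerSeriesOnBall_zero (1 / 2)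
  set b : ℕ → ℂ := fun n => Ring.choose ((1 / 2 : ℂ) + (n : ℂ) - 1) n with hb
  have hsum (u : ℂ) (hu : ‖u‖ = 1) :
      ∑' n, b n * (t * u) ^ n = 1 / (1 - t * u) ^ (1 / 2 : ℂ) := by
    have h := (hfps.hasSum (hball u hu)).tsum_eq
    simpa [FormalMultilinearSeries.ofScalars, List.ofFn_const, List.prod_replicate, hb] using h
  have hnorm (u : ℂ) (hu : ‖u‖ = 1) : Summable fun n => ‖b n * (t * u) ^ n‖ := by
    have h := FormalMultilinearSeries.summable_norm_apply _
      (Metric.eball_subset_eball hfps.r_le (hball u hu))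
    simpa [FormalMultilinearSeries.ofScalars, List.ofFn_const, List.prod_replicate, hb] using h
  have hconj : ‖(starRingEnd ℂ) z‖ = 1 := by rw [RCLike.norm_conj, hznorm]
  have hcoef (n : ℕ) : ∑ kl ∈ Finset.HasAntidiagonal.antidiagonal n, b kl.1 * (t * z) ^ kl.1 *
      (b kl.2 * (t * (starRingEnd ℂ) z) ^ kl.2) = ((legendreP n x * t ^ n : ℝ) : ℂ) := by
    push_cast
    rw [← coeff_invSqrtSeries_mul z _ x hzs hzw n, PowerSeries.coeff_mul, Finset.sum_mul]
    refine Finset.sum_congr rfl fun kl hkl => ?_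
    rw [← Finset.HasAntidiagonal.mem_antidiagonal.mp hkl]
    simp only [invSqrtSeries, PowerSeries.coeff_mk, hb]
    ring
  refine ⟨?_, ?_⟩
  · have := summable_norm_sum_mul_antidiagonal_of_summable_norm (hnorm z hznorm) (hnorm _ hconj)
    simpa only [hcoef, Complex.norm_real, Real.norm_eq_abs] using this
  · have h := tsum_mul_tsum_eq_tsum_sum_antidiagonal_of_summable_norm (hnorm z hznorm)
      (hnorm _ hconj)
    simp only [hcoef] at h
    rw [← Complex.ofReal_tsum, hsum z hznorm, hsum _ hconj] at h
    have hslit : (1 - (t : ℂ) * z).arg ≠ π := by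
      refine Complex.slitPlane_arg_ne_pi ?_
      have := Complex.mem_slitPlane_of_norm_lt_one (z := -(t * z)) (by simpa [hznorm] using ht)
      simpa [sub_eq_add_neg] using this
    have hc : (1 - (t : ℂ) * (starRingEnd ℂ) z) ^ (1 / 2 : ℂ) =
        (starRingEnd ℂ) ((1 - (t : ℂ) * z) ^ (1 / 2 : ℂ)) := by
      have := Complex.conj_cpow (1 - (t : ℂ) * z) (1 / 2) hslit
      simpa [Complex.conj_ofNat] using this
    rw [hc, div_mul_div_comm, one_mul, Complex.mul_conj, Complex.normSq_eq_norm_sq] at h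
    have hn : ‖(1 - (t : ℂ) * z) ^ (1 / 2 : ℂ)‖ ^ 2 = √(1 - 2 * x * t + t ^ 2) := by
      have hhalf : (1 / 2 : ℂ) = ((1 / 2 : ℝ) : ℂ) := by push_cast; rfl
      rw [hhalf, Complex.norm_cpow_real, ← Real.sqrt_eq_rpow, Real.sq_sqrt (norm_nonneg _),
        Complex.norm_def, Complex.normSq_apply]
      congr 1
      simp [hz]
      nlinarith [Real.mul_self_sqrt hx2]
    rw [hn] at h
    exact_mod_cast h.symm

/-- Legendre expansion of the Newtonian potential `1 / ‖q - s • p‖`. -/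
theorem hasSum_legendreP_potential (p q : V3) (hp : p ≠ 0) (hq : q ≠ 0) (s : ℝ)
    (hs : |s| * ‖p‖ < ‖q‖) :
    (Summable fun n => |legendreP n (⟪p, q⟫ / (‖p‖ * ‖q‖)) * (s * (‖p‖ / ‖q‖)) ^ n|) ∧
      HasSum (fun n => legendreP n (⟪p, q⟫ / (‖p‖ * ‖q‖)) * (s * (‖p‖ / ‖q‖)) ^ n)
        (‖q‖ / ‖q - s • p‖) := by
  have hp' : 0 < ‖p‖ := norm_pos_iff.mpr hp
  have hq' : 0 < ‖q‖ := norm_pos_iff.mpr hq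
  have ht : |s * (‖p‖ / ‖q‖)| < 1 := by
    rw [abs_mul, abs_of_pos (div_pos hp' hq'), ← mul_div_assoc, div_lt_one hq']
    exact hs
  obtain ⟨hsum, heq⟩ := legendreP_generating (⟪p, q⟫ / (‖p‖ * ‖q‖)) (s * (‖p‖ / ‖q‖))
    (abs_real_inner_div_norm_mul_norm_le_one p q) ht
  refine ⟨hsum, ?_⟩
  have hval : ‖q‖ / ‖q - s • p‖ = 1 / √(1 - 2 * (⟪p, q⟫ / (‖p‖ * ‖q‖)) * (s * (‖p‖ / ‖q‖)) +
      (s * (‖p‖ / ‖q‖)) ^ 2) := by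
    have hsq : 1 - 2 * (⟪p, q⟫ / (‖p‖ * ‖q‖)) * (s * (‖p‖ / ‖q‖)) + (s * (‖p‖ / ‖q‖)) ^ 2 =
        (‖q - s • p‖ / ‖q‖) ^ 2 := by
      rw [div_pow, norm_sub_sq_real, inner_smul_right, real_inner_comm, norm_smul, Real.norm_eq_abs,
        mul_pow |s|, sq_abs]
      field_simp
    rw [hsq, Real.sqrt_sq (by positivity), one_div_div]
  rw [hval, ← heq]
  exact hsum.of_abs.hasSum

/-- **Legendre expansion of the inner perturbing function.** -/
theorem inner_perturbing_function_legendre_expansion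
    (m0 m1 m2 : ℝ) (hm0 : 0 < m0) (hm1 : 0 < m1) (hm2 : 0 < m2)
    (q1 q2 : V3) (hq1 : q1 ≠ 0) (hq2 : q2 ≠ 0)
    (hsep : max (m0 / (m0 + m1)) (m1 / (m0 + m1)) * ‖q1‖ < ‖q2‖) :
    (Summable fun n : ℕ =>
      |((m0 / (m0 + m1)) ^ (n + 1) + (-1 : ℝ) ^ (n + 2) * (m1 / (m0 + m1)) ^ (n + 1))
        * legendreP (n + 2) (⟪q1, q2⟫ / (‖q1‖ * ‖q2‖)) * (‖q1‖ / ‖q2‖) ^ (n + 2)|) ∧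
    ((m0 + m1) * m2 / (m0 + m1 + m2) * (m0 + m1 + m2) / ‖q2‖
        - m0 * m2 / ‖q2 + (m1 / (m0 + m1)) • q1‖
        - m1 * m2 / ‖q2 - (m0 / (m0 + m1)) • q1‖
      = -(m0 * m1 / (m0 + m1) * m2 / ‖q2‖) *
          ∑' n : ℕ,
            ((m0 / (m0 + m1)) ^ (n + 1) + (-1 : ℝ) ^ (n + 2) * (m1 / (m0 + m1)) ^ (n + 1))
              * legendreP (n + 2) (⟪q1, q2⟫ / (‖q1‖ * ‖q2‖)) * (‖q1‖ / ‖q2‖) ^ (n + 2)) := by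
  have hM : 0 < m0 + m1 := by positivity
  set s0 := m0 / (m0 + m1) with hs0
  set s1 := m1 / (m0 + m1) with hs1
  have hs0_pos : 0 < s0 := by positivity
  have hs1_pos : 0 < s1 := by positivity
  have hq1' : 0 < ‖q1‖ := norm_pos_iff.mpr hq1
  have hq2' : 0 < ‖q2‖ := norm_pos_iff.mpr hq2
  have hsep0 : |s0| * ‖q1‖ < ‖q2‖ := by
    rw [abs_of_pos hs0_pos]
    exact (mul_le_mul_of_nonneg_right (le_max_left _ _) hq1'.le).trans_lt hsep
  have hsep1 : |-s1| * ‖q1‖ < ‖q2‖ := by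
    rw [abs_neg, abs_of_pos hs1_pos]
    exact (mul_le_mul_of_nonneg_right (le_max_right _ _) hq1'.le).trans_lt hsep
  obtain ⟨habs0, hsum0⟩ := hasSum_legendreP_potential q1 q2 hq1 hq2 s0 hsep0
  obtain ⟨habs1, hsum1⟩ := hasSum_legendreP_potential q1 q2 hq1 hq2 (-s1) hsep1
  rw [neg_smul, sub_neg_eq_add] at hsum1
  set x := ⟪q1, q2⟫ / (‖q1‖ * ‖q2‖)
  set r := ‖q1‖ / ‖q2‖
  have hterm (n : ℕ) : (s0 ^ (n + 1) + (-1 : ℝ) ^ (n + 2) * s1 ^ (n + 1)) *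
      legendreP (n + 2) x * r ^ (n + 2) =
      s0⁻¹ * (legendreP (n + 2) x * (s0 * r) ^ (n + 2)) +
        s1⁻¹ * (legendreP (n + 2) x * (-s1 * r) ^ (n + 2)) := by
    rw [neg_mul, neg_pow (s1 * r)]
    field_simp
    ring
  have htail0 := (hasSum_nat_add_iff' 2).mpr hsum0
  have htail1 := (hasSum_nat_add_iff' 2).mpr hsum1
  have htotal := (htail0.mul_left s0⁻¹).add (htail1.mul_left s1⁻¹)
  simp only [hterm]
  refine ⟨?_, ?_⟩
  · have h0 := ((summable_nat_add_iff 2).mpr habs0).mul_left s0⁻¹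
    have h1 := ((summable_nat_add_iff 2).mpr habs1).mul_left s1⁻¹
    refine (h0.add h1).of_nonneg_of_le (fun _ => abs_nonneg _) fun n => ?_
    refine (abs_add_le _ _).trans_eq ?_
    rw [abs_mul s0⁻¹, abs_mul s1⁻¹, abs_of_pos (inv_pos.mpr hs0_pos),
      abs_of_pos (inv_pos.mpr hs1_pos)]
  · rw [htotal.tsum_eq]
    simp only [Finset.sum_range_succ, Finset.sum_range_zero, legendreP_zero, legendreP_one,
      pow_zero, pow_one, zero_add, mul_one]
    rw [div_eq_mul_inv _ ‖q2 - s0 • q1‖, div_eq_mul_inv _ ‖q2 + s1 • q1‖,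
      div_eq_mul_inv _ ‖q2 - s0 • q1‖, div_eq_mul_inv _ ‖q2 + s1 • q1‖]
    generalize ‖q2 - s0 • q1‖⁻¹ = a
    generalize ‖q2 + s1 • q1‖⁻¹ = b
    rw [hs0, hs1]
    field_simp
    ring
end
end

section
/- Equilibria of the quadrupolar Hamiltonian and the associated periodic orbits. Let L_1 > 0 and 0 < Γ̃_2 < √(3/5)·L_1. Then 2/(5(1 − Γ̃_2²/L_1²)) ∈ (2/5, 1), there is a unique γ_1^min ∈ (0, π/2) with sin²γ_1^min = 2/(5(1 − Γ̃_2²/L_1²)), and setting γ_1^max = π − γ_1^min, the points (γ_1, Γ_1) = (γ_1^min, L_1) and (γ_1^max, L_1) are equilibria of the Hamiltonian vector field γ̇_1 = ∂H_0^{12}/∂Γ_1, Γ̇_1 = −∂H_0^{12}/∂γ_1. Moreover, for any γ̃_2^0 ∈ ℝ, the curves t ↦ (γ_1^min, L_1, γ̃_2^0 + (2Γ̃_2/L_1²)t, Γ̃_2) and t ↦ (γ_1^max, L_1, γ̃_2^0 + (2Γ̃_2/L_1²)t, Γ̃_2) are solutions of the full Hamiltonian system γ̇_1 = ∂H_0^{12}/∂Γ_1,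 Γ̇_1 = −∂H_0^{12}/∂γ_1, dγ̃_2/dt = ∂H_0^{12}/∂Γ̃_2, dΓ̃_2/dt = −∂H_0^{12}/∂γ̃_2 = 0. -/
noncomputable section

open Real

/-- The quadrupolar model Hamiltonian
`H₀¹²(γ₁, Γ₁) = (1 − Γ₁²/L₁²)·[2 − 5(1 − Γ̃₂²/Γ₁²) sin²γ₁] + Γ̃₂²/L₁²`,
with parameters `L1` and `G2 = Γ̃₂`; it does not depend on the angle `γ̃₂`
conjugate to `Γ̃₂`. -/
def H012 (L1 γ1 Γ1 G2 : ℝ) : ℝ :=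
  (1 - Γ1 ^ 2 / L1 ^ 2) * (2 - 5 * (1 - G2 ^ 2 / Γ1 ^ 2) * Real.sin γ1 ^ 2) + G2 ^ 2 / L1 ^ 2

/-- At `Γ₁ = L₁` the derivative of `H012` in `Γ₁` is `-2/L₁` times the bracket. -/
theorem hasDerivAt_H012_action {L1 : ℝ} (hL1 : L1 ≠ 0) (γ G2 : ℝ) :
    HasDerivAt (fun Γ => H012 L1 γ Γ G2)
      (-(2 / L1) * (2 - 5 * (1 - G2 ^ 2 / L1 ^ 2) * Real.sin γ ^ 2)) L1 := by
  have hfactor : HasDerivAt (fun Γ : ℝ => 1 - Γ ^ 2 / L1 ^ 2) (-(2 / L1)) L1 := by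
    refine (((hasDerivAt_pow 2 L1).div_const (L1 ^ 2)).const_sub 1).congr_deriv ?_
    simp
    field_simp
  have hbracket : DifferentiableAt ℝ
      (fun Γ : ℝ => 2 - 5 * (1 - G2 ^ 2 / Γ ^ 2) * Real.sin γ ^ 2) L1 := by
    have : L1 ^ 2 ≠ 0 := pow_ne_zero 2 hL1
    fun_prop (disch := assumption)
  refine ((hfactor.mul hbracket.hasDerivAt).add_const (G2 ^ 2 / L1 ^ 2)).congr_deriv ?_
  rw [div_self (pow_ne_zero 2 hL1)]
  ring

/-- On the boundary `Γ₁ = L₁` the Hamiltonian reduces to `Γ̃₂²/L₁²`. -/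
theorem H012_self {L1 : ℝ} (hL1 : L1 ≠ 0) (γ G2 : ℝ) :
    H012 L1 γ L1 G2 = G2 ^ 2 / L1 ^ 2 := by
  simp [H012, hL1]

/-- Every `y ∈ (0, 1)` is the squared sine of exactly one angle in `(0, π/2)`. -/
theorem existsUnique_sin_sq_eq {y : ℝ} (hy : y ∈ Set.Ioo (0 : ℝ) 1) :
    ∃! γ : ℝ, γ ∈ Set.Ioo 0 (π / 2) ∧ Real.sin γ ^ 2 = y := by
  have hpos : 0 < √y := Real.sqrt_pos.2 hy.1
  have hlt : √y < 1 := (Real.sqrt_lt' one_pos).2 (by simpa using hy.2)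
  refine ⟨Real.arcsin (√y), ⟨⟨Real.arcsin_pos.2 hpos, Real.arcsin_lt_pi_div_two.2 hlt⟩, ?_⟩, ?_⟩
  · rw [Real.sin_arcsin (by linarith) hlt.le, Real.sq_sqrt hy.1.le]
  · rintro γ ⟨⟨h0, h1⟩, rfl⟩
    rw [Real.sqrt_sq (Real.sin_nonneg_of_nonneg_of_le_pi h0.le (by linarith)),
      Real.arcsin_sin (by linarith) h1.le]

/-- **Equilibria of the quadrupolar Hamiltonian and the associated periodic orbits.** -/
theorem quadrupolar_equilibria_and_periodic_orbits
    (L1 G2 : ℝ) (hL1 : 0 < L1) (hG2 : 0 < G2)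
    (hlt : G2 < Real.sqrt (3 / 5) * L1) :
    (2 / (5 * (1 - G2 ^ 2 / L1 ^ 2)) ∈ Set.Ioo (2/5 : ℝ) 1) ∧
    (∃! γmin : ℝ, γmin ∈ Set.Ioo 0 (π / 2) ∧
        Real.sin γmin ^ 2 = 2 / (5 * (1 - G2 ^ 2 / L1 ^ 2))) ∧
    (∀ γmin ∈ Set.Ioo (0:ℝ) (π / 2),
      Real.sin γmin ^ 2 = 2 / (5 * (1 - G2 ^ 2 / L1 ^ 2)) →
      ∀ γeq ∈ ({γmin, π - γmin} : Set ℝ),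
        -- `(γeq, L1)` is an equilibrium of the `(γ₁,Γ₁)` Hamiltonian vector field,
        (deriv (fun Γ => H012 L1 γeq Γ G2) L1 = 0 ∧
         deriv (fun γ => H012 L1 γ L1 G2) γeq = 0) ∧
        -- and the lifted curve is a solution (a periodic orbit) of the full system.
        ∀ γ20 t : ℝ,
          HasDerivAt (fun _ : ℝ => γeq) (deriv (fun Γ => H012 L1 γeq Γ G2) L1) t ∧
          HasDerivAt (fun _ : ℝ => L1) (-(deriv (fun γ => H012 L1 γ L1 G2) γeq)) t ∧
          HasDerivAt (fun s : ℝ => γ20 + (2 * G2 / L1 ^ 2) * s)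
            (deriv (fun G => H012 L1 γeq L1 G) G2) t ∧
          HasDerivAt (fun _ : ℝ => G2) 0 t) := by
  have hratio_pos : 0 < G2 ^ 2 / L1 ^ 2 := by positivity
  have hratio_lt : G2 ^ 2 / L1 ^ 2 < 3 / 5 := by
    rw [div_lt_iff₀ (by positivity)]
    calc G2 ^ 2 < (√(3 / 5) * L1) ^ 2 := by gcongr
      _ = 3 / 5 * L1 ^ 2 := by rw [mul_pow, Real.sq_sqrt (by norm_num)]
  have hmem : 2 / (5 * (1 - G2 ^ 2 / L1 ^ 2)) ∈ Set.Ioo (2 / 5 : ℝ) 1 := by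
    have hden : 0 < 5 * (1 - G2 ^ 2 / L1 ^ 2) := by linarith
    constructor
    · rw [lt_div_iff₀ hden]; linarith
    · rw [div_lt_one hden]; linarith
  refine ⟨hmem, existsUnique_sin_sq_eq ⟨by linarith [hmem.1], hmem.2⟩, ?_⟩
  intro γmin _ hsin γeq hγeq
  have hsin_eq : Real.sin γeq ^ 2 = 2 / (5 * (1 - G2 ^ 2 / L1 ^ 2)) := by
    rcases hγeq with rfl | rfl
    · exact hsin
    · rwa [Real.sin_pi_sub]
  have hbracket : 2 - 5 * (1 - G2 ^ 2 / L1 ^ 2) * Real.sin γeq ^ 2 = 0 := by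
    rw [hsin_eq, mul_div_cancel₀ _ (by linarith : 5 * (1 - G2 ^ 2 / L1 ^ 2) ≠ 0), sub_self]
  have hΓ : deriv (fun Γ => H012 L1 γeq Γ G2) L1 = 0 := by
    rw [(hasDerivAt_H012_action hL1.ne' γeq G2).deriv, hbracket, mul_zero]
  have hγ : deriv (fun γ => H012 L1 γ L1 G2) γeq = 0 := by
    simp [H012_self hL1.ne']
  have hG : deriv (fun G => H012 L1 γeq L1 G) G2 = 2 * G2 / L1 ^ 2 := by
    simp [H012_self hL1.ne']
  refine ⟨⟨hΓ, hγ⟩, fun γ20 t => ?_⟩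
  rw [hΓ, hγ, hG, neg_zero]
  refine ⟨hasDerivAt_const t γeq, hasDerivAt_const t L1, ?_, hasDerivAt_const t G2⟩
  simpa using ((hasDerivAt_id t).const_mul (2 * G2 / L1 ^ 2)).const_add γ20
end
end

section
/- Hyperbolicity of the secular equilibrium in Poincaré variables. Let L_1 > 0 and 0 < Γ̃_2 < √(3/5)·L_1, and set b = 3 − 5Γ̃_2²/L_1² > 0. Consider the quadratic Hamiltonian Q(ξ, η) = (1/L_1)·(2ξ² − b·η²) on ℝ² with Hamiltonian equations ξ′ = ∂Q/∂η, η′ = −∂Q/∂ξ; its linearisation at the origin is the matrix [[0, −2b/L_1], [−4/L_1, 0]]. This matrix has two real eigenvalues ±A_2, where A_2 = (6/L_1)·√(2/3)·√(1 − (5/3)·Γ̃_2²/L_1²) > 0; in particular the origin is a hyperbolic saddle of the quadratic part of the quadrupolar Hamiltonian in Poincaré variables. -/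
noncomputable section

open Real

/-- An antidiagonal `2 × 2` matrix with entries `p` and `q ≠ 0` has every square root of `p * q`
as an eigenvalue. -/
theorem hasEigenvalue_antidiagonal {K : Type*} [Field K] {p q μ : K} (hq : q ≠ 0)
    (h : μ ^ 2 = p * q) :
    Module.End.HasEigenvalue (Matrix.toLin' !![0, p; q, 0]) μ := by
  refine Module.End.hasEigenvalue_of_hasEigenvector (x := ![μ, q])
    (Module.End.hasEigenvector_iff.mpr ⟨Module.End.mem_eigenspace_iff.mpr ?_, fun h0 => hq ?_⟩)
  · ext i
    fin_cases i
    · simp [Matrix.toLin'_apply, Matrix.mulVec, dotProduct, ← h, sq]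
    · simp [Matrix.toLin'_apply, Matrix.mulVec, dotProduct, mul_comm]
  · simpa using congrFun h0 1

/-- The derivative of a real quadratic polynomial without linear term. -/
theorem hasDerivAt_const_mul_add_sq (k c d x : ℝ) :
    HasDerivAt (fun y => k * (c + d * y ^ 2)) (k * (d * (2 * x))) x := by
  simpa using (((hasDerivAt_pow 2 x).const_mul d).const_add c).const_mul k

/-- **Hyperbolicity of the secular equilibrium in Poincaré variables.** The quadratic part
`Q(ξ,η) = (1/L₁)(2ξ² − bη²)` of the quadrupolar Hamiltonian in Poincaré variables has, as
linearisation of its Hamiltonian vector field at the origin, the matrix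
`[[0, −2b/L₁], [−4/L₁, 0]]`, whose eigenvalues are `±A₂` with `A₂ > 0`. -/
theorem quadrupolar_origin_hyperbolic
    (L1 G2 : ℝ) (hL1 : 0 < L1) (hG2 : 0 < G2)
    (hlt : G2 < Real.sqrt (3 / 5) * L1) :
    (0 < 3 - 5 * G2 ^ 2 / L1 ^ 2) ∧
    (0 < (6 / L1) * Real.sqrt (2 / 3) * Real.sqrt (1 - (5 / 3) * G2 ^ 2 / L1 ^ 2)) ∧
    -- the Hamiltonian vector field of `Q` is linear, given by the matrix
    (∀ ξ η : ℝ,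
      Matrix.mulVec !![0, -(2 * (3 - 5 * G2 ^ 2 / L1 ^ 2)) / L1; -(4 : ℝ) / L1, 0] ![ξ, η]
        = ![deriv (fun y => (1 / L1) * (2 * ξ ^ 2 - (3 - 5 * G2 ^ 2 / L1 ^ 2) * y ^ 2)) η,
            -(deriv (fun x => (1 / L1) * (2 * x ^ 2 - (3 - 5 * G2 ^ 2 / L1 ^ 2) * η ^ 2)) ξ)]) ∧
    -- the matrix has the two real eigenvalues `± A₂`
    Module.End.HasEigenvalue
      (Matrix.toLin' !![0, -(2 * (3 - 5 * G2 ^ 2 / L1 ^ 2)) / L1; -(4 : ℝ) / L1, 0])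
      ((6 / L1) * Real.sqrt (2 / 3) * Real.sqrt (1 - (5 / 3) * G2 ^ 2 / L1 ^ 2)) ∧
    Module.End.HasEigenvalue
      (Matrix.toLin' !![0, -(2 * (3 - 5 * G2 ^ 2 / L1 ^ 2)) / L1; -(4 : ℝ) / L1, 0])
      (-((6 / L1) * Real.sqrt (2 / 3) * Real.sqrt (1 - (5 / 3) * G2 ^ 2 / L1 ^ 2))) := by
  have hb : 0 < 3 - 5 * G2 ^ 2 / L1 ^ 2 := by
    have hsq : G2 ^ 2 < 3 / 5 * L1 ^ 2 := by
      calc G2 ^ 2 < (√(3 / 5) * L1) ^ 2 := by gcongr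
        _ = 3 / 5 * L1 ^ 2 := by rw [mul_pow, Real.sq_sqrt (by norm_num)]
    rw [sub_pos, div_lt_iff₀ (by positivity)]
    linarith
  have hc : 1 - (5 / 3) * G2 ^ 2 / L1 ^ 2 = (3 - 5 * G2 ^ 2 / L1 ^ 2) / 3 := by ring
  have hA : ((6 / L1) * √(2 / 3) * √(1 - (5 / 3) * G2 ^ 2 / L1 ^ 2)) ^ 2
      = -(2 * (3 - 5 * G2 ^ 2 / L1 ^ 2)) / L1 * (-4 / L1) := by
    rw [hc, mul_pow, mul_pow, Real.sq_sqrt (by norm_num), Real.sq_sqrt (by positivity)]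
    ring
  have hq : -(4 : ℝ) / L1 ≠ 0 := div_ne_zero (by norm_num) hL1.ne'
  refine ⟨hb, ?_, fun ξ η => ?_, hasEigenvalue_antidiagonal hq hA,
    hasEigenvalue_antidiagonal hq (by rw [neg_sq, hA])⟩
  · rw [hc]
    positivity
  · generalize 3 - 5 * G2 ^ 2 / L1 ^ 2 = b
    have hη : HasDerivAt (fun y => (1 / L1) * (2 * ξ ^ 2 - b * y ^ 2))
        ((1 / L1) * (-b * (2 * η))) η := by
      simpa [sub_eq_add_neg] using hasDerivAt_const_mul_add_sq (1 / L1) (2 * ξ ^ 2) (-b) η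
    have hξ : HasDerivAt (fun x => (1 / L1) * (2 * x ^ 2 - b * η ^ 2))
        ((1 / L1) * (2 * (2 * ξ))) ξ := by
      simpa [neg_add_eq_sub] using hasDerivAt_const_mul_add_sq (1 / L1) (-(b * η ^ 2)) 2 ξ
    rw [hη.deriv, hξ.deriv]
    ext i
    fin_cases i <;> simp [Matrix.mulVec, dotProduct] <;> ring
end
end

section
/- Heteroclinic asymptotics of the separatrix (Lemma 5.1, part 2). Let L_1 > 0, 0 < Γ̃_2 < √(3/5)·L_1, let χ, A_2 be as defined, and let γ_1(t) ∈ (0,π), Γ_1(t), γ̃_2(t) be the explicit separatrix parametrisation. Let γ_1^min ∈ (0, π/2) be the unique solution of sin²γ_1^min = 2/(5(1 − Γ̃_2²/L_1²)) and γ_1^max = π − γ_1^min. Then, as t → +∞, (γ_1(t), Γ_1(t)) → (γ_1^min, L_1) and γ̃_2(t) − γ̃_2^0 − (2Γ̃_2/L_1²)t → arctan(χ^{−1}); and as t → −∞, (γ_1(t), Γ_1(t)) → (γ_1^max, L_1) and γ̃_2(t) − γ̃_2^0 − (2Γ̃_2/L_1²)t → −arctan(χ^{−1}). In particular the separatrix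 is a heteroclinic orbit joining the periodic orbit through (γ_1^max, L_1) backward in time to the periodic orbit through (γ_1^min, L_1) forward in time. -/
noncomputable section

open Real Filter Topology

/-- The hyperbolic tangent tends to `1` at `+∞`. -/
theorem tendsto_tanh_atTop_one : Tendsto Real.tanh atTop (𝓝 1) := by
  have hexp : Tendsto (fun x : ℝ => Real.exp (-(2 * x))) atTop (𝓝 0) :=
    Real.tendsto_exp_neg_atTop_nhds_zero.comp (tendsto_id.const_mul_atTop two_pos)
  have hlim : Tendsto (fun x : ℝ => (1 - Real.exp (-(2 * x))) / (1 + Real.exp (-(2 * x))))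
      atTop (𝓝 ((1 - 0) / (1 + 0))) :=
    (hexp.const_sub 1).div (hexp.const_add 1) (by norm_num)
  rw [show ((1 : ℝ) - 0) / (1 + 0) = 1 by norm_num] at hlim
  refine hlim.congr fun x => ?_
  have hsq : Real.exp (-(2 * x)) = Real.exp (-x) * Real.exp (-x) := by
    rw [← Real.exp_add]; ring_nf
  have hinv : Real.exp x * Real.exp (-x) = 1 := by rw [← Real.exp_add]; simp
  have hpos := Real.exp_pos x
  have hneg := Real.exp_pos (-x)
  rw [Real.tanh_eq_sinh_div_cosh, Real.sinh_eq, Real.cosh_eq, hsq,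
    div_eq_div_iff (by positivity) (by positivity)]
  linear_combination (-Real.exp (-x)) * hinv

/-- The hyperbolic tangent tends to `-1` at `-∞`. -/
theorem tendsto_tanh_atBot_neg_one : Tendsto Real.tanh atBot (𝓝 (-1)) :=
  (tendsto_tanh_atTop_one.comp tendsto_neg_atBot_atTop).neg.congr fun x => by simp

/-- The square root of `a + b * sinh x ^ 2` is the product of `cosh x` and a function
of `tanh x`. -/
theorem sqrt_add_mul_sinh_sq (a b x : ℝ) :
    Real.sqrt (a + b * Real.sinh x ^ 2) =
      Real.cosh x * Real.sqrt (a + (b - a) * Real.tanh x ^ 2) := by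
  have hc := Real.cosh_pos x
  have h : a + b * Real.sinh x ^ 2 =
      Real.cosh x ^ 2 * (a + (b - a) * Real.tanh x ^ 2) := by
    rw [Real.tanh_eq_sinh_div_cosh]
    field_simp
    rw [Real.cosh_sq]
    ring
  rw [h, Real.sqrt_mul (sq_nonneg _), Real.sqrt_sq hc.le]

/-- **Heteroclinic asymptotics of the separatrix (Lemma 5.1, part 2).** -/
theorem quadrupolar_separatrix_heteroclinic
    (L1 G2 : ℝ) (hL1 : 0 < L1) (hG2 : 0 < G2)
    (hlt : G2 < Real.sqrt (3 / 5) * L1) (γ20 : ℝ)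
    (γmin : ℝ) (hγmin : γmin ∈ Set.Ioo 0 (π / 2))
    (hsin : Real.sin γmin ^ 2 = 2 / (5 * (1 - G2 ^ 2 / L1 ^ 2))) :
    let χ : ℝ := Real.sqrt (2 / 3) * (G2 / L1) / Real.sqrt (1 - (5 / 3) * G2 ^ 2 / L1 ^ 2)
    let A2 : ℝ := (6 / L1) * Real.sqrt (2 / 3) * Real.sqrt (1 - (5 / 3) * G2 ^ 2 / L1 ^ 2)
    let γ1 : ℝ → ℝ := fun t => Real.arccos (Real.sqrt (3 / 5) * Real.sinh (A2 * t) /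
      Real.sqrt (χ ^ 2 + (1 + χ ^ 2) * Real.sinh (A2 * t) ^ 2))
    let Γ1 : ℝ → ℝ := fun t => G2 * Real.sqrt (5 / 3) *
      Real.sqrt (1 + (3 / 5) * (L1 ^ 2 / G2 ^ 2) * Real.sinh (A2 * t) ^ 2) / Real.cosh (A2 * t)
    let γ2 : ℝ → ℝ := fun t => γ20 + (2 * G2 / L1 ^ 2) * t
      + Real.arctan (χ⁻¹ * Real.tanh (A2 * t))
    -- forward in time the separatrix converges to the periodic orbit through `(γ₁ᵐⁱⁿ, L₁)`
    Tendsto γ1 atTop (𝓝 γmin) ∧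
    Tendsto Γ1 atTop (𝓝 L1) ∧
    Tendsto (fun t => γ2 t - γ20 - (2 * G2 / L1 ^ 2) * t) atTop (𝓝 (Real.arctan χ⁻¹)) ∧
    -- backward in time it converges to the periodic orbit through `(γ₁ᵐᵃˣ, L₁)`
    Tendsto γ1 atBot (𝓝 (π - γmin)) ∧
    Tendsto Γ1 atBot (𝓝 L1) ∧
    Tendsto (fun t => γ2 t - γ20 - (2 * G2 / L1 ^ 2) * t) atBot (𝓝 (-Real.arctan χ⁻¹)) := by
  intro χ A2 γ1 Γ1 γ2
  have hL : L1 ≠ 0 := hL1.ne'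
  have hratio : 5 / 3 * G2 ^ 2 / L1 ^ 2 < 1 := by
    have hsq : G2 ^ 2 < (Real.sqrt (3 / 5) * L1) ^ 2 := by gcongr
    rw [mul_pow, Real.sq_sqrt (by norm_num)] at hsq
    rw [div_lt_one (by positivity)]
    linarith
  have hD : 0 < 1 - 5 / 3 * G2 ^ 2 / L1 ^ 2 := by linarith
  have hA : 0 < A2 := by positivity
  have hχ : 0 < χ := by positivity
  have hχsq : χ ^ 2 = 2 / 3 * (G2 / L1) ^ 2 / (1 - 5 / 3 * G2 ^ 2 / L1 ^ 2) := by
    simp only [χ]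
    rw [div_pow, mul_pow, Real.sq_sqrt (by norm_num), Real.sq_sqrt hD.le]
  have hcos : Real.sqrt (3 / 5) / Real.sqrt (χ ^ 2 + 1) = Real.cos γmin := by
    have hcospos : 0 < Real.cos γmin :=
      Real.cos_pos_of_mem_Ioo ⟨by linarith [hγmin.1, Real.pi_pos], hγmin.2⟩
    rw [← Real.sqrt_div (by norm_num), ← Real.sqrt_sq hcospos.le, Real.cos_sq', hsin, hχsq]
    congr 1
    have hD' : 0 < 3 * L1 ^ 2 - 5 * G2 ^ 2 := by
      rw [div_lt_one (by positivity)] at hratio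
      linarith
    have hE : 0 < L1 ^ 2 - G2 ^ 2 := by nlinarith [sq_nonneg G2]
    have h₁ : 1 - 5 / 3 * G2 ^ 2 / L1 ^ 2 = (3 * L1 ^ 2 - 5 * G2 ^ 2) / (3 * L1 ^ 2) := by
      field_simp
    have h₂ : 1 - G2 ^ 2 / L1 ^ 2 = (L1 ^ 2 - G2 ^ 2) / L1 ^ 2 := by field_simp
    have h₃ : 2 / 3 * (G2 / L1) ^ 2 / ((3 * L1 ^ 2 - 5 * G2 ^ 2) / (3 * L1 ^ 2)) + 1 =
        3 * (L1 ^ 2 - G2 ^ 2) / (3 * L1 ^ 2 - 5 * G2 ^ 2) := by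
      rw [eq_div_iff hD'.ne', add_mul, div_div_eq_mul_div, div_mul_cancel₀ _ hD'.ne']
      field_simp
      ring
    rw [h₁, h₂, h₃]
    field_simp
    ring
  have hγ1 : γ1 = fun t => Real.arccos (Real.sqrt (3 / 5) * Real.tanh (A2 * t) /
      Real.sqrt (χ ^ 2 + Real.tanh (A2 * t) ^ 2)) := by
    funext t
    simp only [γ1]
    rw [sqrt_add_mul_sinh_sq, add_sub_cancel_right, one_mul, ← div_div, mul_div_assoc,
      ← Real.tanh_eq_sinh_div_cosh]
  have hΓ1 : Γ1 = fun t => G2 * Real.sqrt (5 / 3) *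
      Real.sqrt (1 + (3 / 5 * (L1 ^ 2 / G2 ^ 2) - 1) * Real.tanh (A2 * t) ^ 2) := by
    funext t
    simp only [Γ1]
    have hc := (Real.cosh_pos (A2 * t)).ne'
    rw [sqrt_add_mul_sinh_sq]
    field_simp
  have hγ2 : (fun t => γ2 t - γ20 - (2 * G2 / L1 ^ 2) * t) =
      fun t => Real.arctan (χ⁻¹ * Real.tanh (A2 * t)) := by
    funext t
    simp only [γ2]
    ring
  have hlim1 : ∀ {l : Filter ℝ} {s : ℝ}, s ^ 2 = 1 →
      Tendsto (fun t => Real.tanh (A2 * t)) l (𝓝 s) →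
      Tendsto γ1 l (𝓝 (Real.arccos (s * Real.cos γmin))) := by
    intro l s hs h
    have hne : Real.sqrt (χ ^ 2 + s ^ 2) ≠ 0 := by positivity
    rw [hγ1, ← hcos, ← mul_div_assoc, mul_comm s, ← hs]
    exact (Real.continuous_arccos.tendsto _).comp
      ((h.const_mul _).div ((h.pow 2).const_add _).sqrt hne)
  have hlim2 : ∀ {l : Filter ℝ} {s : ℝ}, s ^ 2 = 1 →
      Tendsto (fun t => Real.tanh (A2 * t)) l (𝓝 s) → Tendsto Γ1 l (𝓝 L1) := by
    intro l s hs h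
    have hval : G2 * Real.sqrt (5 / 3) *
        Real.sqrt (1 + (3 / 5 * (L1 ^ 2 / G2 ^ 2) - 1) * s ^ 2) = L1 := by
      rw [hs, mul_assoc, ← Real.sqrt_mul (by norm_num),
        show 5 / 3 * (1 + (3 / 5 * (L1 ^ 2 / G2 ^ 2) - 1) * 1) = (L1 / G2) ^ 2 by ring,
        Real.sqrt_sq (by positivity), mul_div_cancel₀ _ hG2.ne']
    have hsqrt := (((h.pow 2).const_mul (3 / 5 * (L1 ^ 2 / G2 ^ 2) - 1)).const_add 1).sqrt
    simpa only [hΓ1, hval] using hsqrt.const_mul (G2 * Real.sqrt (5 / 3))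
  have hlim3 : ∀ {l : Filter ℝ} {s : ℝ}, Tendsto (fun t => Real.tanh (A2 * t)) l (𝓝 s) →
      Tendsto (fun t => γ2 t - γ20 - (2 * G2 / L1 ^ 2) * t) l (𝓝 (Real.arctan (χ⁻¹ * s))) := by
    intro l s h
    rw [hγ2]
    exact (Real.continuous_arctan.tendsto _).comp (h.const_mul _)
  have htop : Tendsto (fun t => Real.tanh (A2 * t)) atTop (𝓝 1) :=
    tendsto_tanh_atTop_one.comp (tendsto_id.const_mul_atTop hA)
  have hbot : Tendsto (fun t => Real.tanh (A2 * t)) atBot (𝓝 (-1)) :=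
    tendsto_tanh_atBot_neg_one.comp (tendsto_id.const_mul_atBot hA)
  have harccos : Real.arccos (Real.cos γmin) = γmin :=
    Real.arccos_cos hγmin.1.le (by linarith [hγmin.2, Real.pi_pos])
  refine ⟨?_, hlim2 (by norm_num) htop, ?_, ?_, hlim2 (by norm_num) hbot, ?_⟩
  · simpa [harccos] using hlim1 (by norm_num) htop
  · simpa using hlim3 htop
  · simpa [Real.arccos_neg, harccos] using hlim1 (by norm_num) hbot
  · simpa [Real.arctan_neg] using hlim3 hbot
end
end

section
/- Average over the outer mean anomaly. Let δ_1 ∈ (0,1), δ_2 ∈ (0,1), δ_3 ∈ ℝ, and set β_0 = (1/2)(9δ_1² − 9δ_3² + 15δ_3²/δ_1² − 15) and β_1 = (1/2)(5 − 3δ_1²). Then: (a) for all γ_3, v ∈ ℝ, A_0(γ_3, v)/2 + C_0(γ_3, v) = β_0·sin²(v − γ_3) + β_1, where A_0, C_0 are as defined; and (b) for all γ_3 ∈ ℝ, (δ_2³/2π)·∫_0^{2π} (1 + √(1 − δ_2²) cos v)·(β_0 sin²(v − γ_3) + β_1) dv = δ_2³·(β_0/2 + β_1). -/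
noncomputable section

open Real

/-- The trigonometric polynomial `A₀`. -/
def A0 (δ1 δ3 γ3 v3 : ℝ) : ℝ :=
  15 * ((δ3 ^ 2 - δ3 ^ 2 / δ1 ^ 2 - (1 - δ1 ^ 2)) * Real.sin (v3 - γ3) ^ 2 + (1 - δ1 ^ 2))

/-- The trigonometric polynomial `B₀`. -/
def B0 (δ1 δ3 γ3 v3 : ℝ) : ℝ :=
  30 * (δ3 / δ1) * (1 - δ1 ^ 2) * Real.cos (v3 - γ3) * Real.sin (v3 - γ3)

/-- The trigonometric polynomial `C₀`. -/
def C0 (δ1 δ3 γ3 v3 : ℝ) : ℝ :=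
  (15 * δ3 ^ 2 / δ1 ^ 2 - 12 * δ3 ^ 2 - 3 * δ1 ^ 2) * Real.sin (v3 - γ3) ^ 2 + 6 * δ1 ^ 2 - 5

/-- The quadrupolar Hamiltonian `H₀²³` of the interaction between bodies 2 and 3. -/
def H023 (δ1 δ2 δ3 γ3 ψ1 v3 : ℝ) : ℝ :=
  (1 + Real.sqrt (1 - δ2 ^ 2) * Real.cos v3) ^ 3 *
    (A0 δ1 δ3 γ3 v3 * Real.cos ψ1 ^ 2 + B0 δ1 δ3 γ3 v3 * Real.cos ψ1 * Real.sin ψ1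
      + C0 δ1 δ3 γ3 v3)

/-- Over a full period, the harmonic `cos v` does not contribute to the integral of
`(1 + e cos v) (a sin² (v - γ) + b)`. -/
theorem integral_one_add_mul_cos_mul_sin_sq (e a b γ : ℝ) :
    ∫ v in (0:ℝ)..(2 * π), (1 + e * Real.cos v) * (a * Real.sin (v - γ) ^ 2 + b)
      = 2 * π * (a / 2 + b) := by
  have hderiv : ∀ v ∈ Set.uIcc (0:ℝ) (2 * π), HasDerivAt
      (fun v : ℝ =>
        a * (cos γ ^ 2 * ((v - sin v * cos v) / 2) - cos γ * sin γ * sin v ^ 2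
            + sin γ ^ 2 * ((v + sin v * cos v) / 2)) + b * v
          + e * (a * (cos γ ^ 2 * (sin v ^ 3 / 3) + 2 * (cos γ * sin γ) * (cos v ^ 3 / 3)
            + sin γ ^ 2 * (sin v - sin v ^ 3 / 3)) + b * sin v))
      ((1 + e * cos v) * (a * sin (v - γ) ^ 2 + b)) v := by
    intro v _
    have hs := hasDerivAt_sin v
    have hc := hasDerivAt_cos v
    have hv := hasDerivAt_id' v
    have hsc := hs.mul hc
    have hs3 := (hs.pow 3).div_const 3
    have hc3 := (hc.pow 3).div_const 3
    have hmean := ((((((hv.sub hsc).div_const 2).const_mul (cos γ ^ 2)).sub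
      ((hs.pow 2).const_mul (cos γ * sin γ))).add
      (((hv.add hsc).div_const 2).const_mul (sin γ ^ 2))).const_mul a).add (hv.const_mul b)
    have hcos := (((((hs3.const_mul (cos γ ^ 2)).add (hc3.const_mul (2 * (cos γ * sin γ)))).add
      ((hs.sub hs3).const_mul (sin γ ^ 2))).const_mul a).add (hs.const_mul b)).const_mul e
    refine (hmean.add hcos).congr_deriv ?_
    rw [sin_sub]
    push_cast
    linear_combination
      (-(a * (cos γ ^ 2 + sin γ ^ 2) / 2 + a * e * cos v * sin γ ^ 2)) * sin_sq_add_cos_sq v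
  rw [intervalIntegral.integral_eq_sub_of_hasDerivAt hderiv
    (Continuous.intervalIntegrable (by fun_prop) _ _)]
  simp only [sin_two_pi, cos_two_pi, sin_zero, cos_zero]
  linear_combination (a * π) * sin_sq_add_cos_sq γ

/-- **Average over the outer mean anomaly.** -/
theorem H023_average_outer_anomaly
    (δ1 δ2 δ3 : ℝ) (h1 : δ1 ∈ Set.Ioo (0:ℝ) 1) (h2 : δ2 ∈ Set.Ioo (0:ℝ) 1) :
    let β0 : ℝ := (1 / 2) * (9 * δ1 ^ 2 - 9 * δ3 ^ 2 + 15 * δ3 ^ 2 / δ1 ^ 2 - 15)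
    let β1 : ℝ := (1 / 2) * (5 - 3 * δ1 ^ 2)
    (∀ γ3 v : ℝ,
      A0 δ1 δ3 γ3 v / 2 + C0 δ1 δ3 γ3 v = β0 * Real.sin (v - γ3) ^ 2 + β1) ∧
    (∀ γ3 : ℝ,
      (δ2 ^ 3 / (2 * π)) *
          ∫ v in (0:ℝ)..(2 * π),
            (1 + Real.sqrt (1 - δ2 ^ 2) * Real.cos v) * (β0 * Real.sin (v - γ3) ^ 2 + β1)
        = δ2 ^ 3 * (β0 / 2 + β1)) := by
  intro β0 β1
  refine ⟨fun γ3 v => ?_, fun γ3 => ?_⟩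
  · simp only [A0, C0, β0, β1]
    ring
  · rw [integral_one_add_mul_cos_mul_sin_sq]
    field_simp
end
end
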